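/- For every n ∈ ℕ, 0 < p < 1 with q = 1 − p, and every t with −(1 − p) < t < p: d_loc(Bi(n, p − t), Bi(n, p)) ≤ |t| ( (1 + p − t)/(pq) + √((p − t)(q + t))/(pq√n) ). -/

import Mathlib

/-! Write `f k s = C(n,k) s^k (1-s)^(n-k)`, `r = p - t`, `q = 1 - p`, `N = n + 1`. A half-open
interval of length one contains at most one integer, so it suffices to bound `|f k r - f k p|`; the
term with the square root is not needed. The reflection `(k, s) ↦ (n - k, 1 - s)` reduces the claim
to `r < p`.

The mean value theorem is applied to `s * f k s`, whose derivative is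
`f k s * (k + 1 - N s) / (1 - s)`: the weight `s` removes the factor `1 / s` from the derivative of
`f k`, which could not be compared with `1 / p` when `r` is much smaller than `p`. Products of
`f k s` with a length are at most `1` by counting: `f k s` times the number of indices `j` with
`f j s ≥ f k s` is at most the total mass. Monotonicity up to the mode yields
`f k s * (N s - k) ≤ 1`. For `s ≤ 1/2` the mass function is skewed to the right, so about as many
indices lie beyond the mode and `f k s * (2 N s - 2 k - 1) ≤ 1`.

The upward difference `f k p - f k r` follows from the first count, reflected. The downward
difference also involves the term `(p - r) * f k r`, controlled by `f k ≤ 1/2` for `0 < k < n`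
(log-concavity). The second count is used if `p ≤ 1/2` and the first one if `p > 1/2`. The
extreme indices are elementary: `k = 0` is convexity of `x ^ n`, and `k = n` is monotonicity. -/

open MeasureTheory ProbabilityTheory

noncomputable def dTV (P Q : Measure ℝ) : ℝ :=
  ⨆ A : {A : Set ℝ // MeasurableSet A}, |(P A.1).toReal - (Q A.1).toReal|

noncomputable def dloc (P Q : Measure ℝ) : ℝ :=
  ⨆ x : ℝ, |(P (Set.Ico x (x + 1))).toReal - (Q (Set.Ico x (x + 1))).toReal|

/-- `D1 μ = ‖μ * (δ₁ - δ₀)‖`, the total variation norm of the signed measure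
`μ*δ₁ - μ`; since this signed measure has total mass `0`, its variation norm equals
`2 * sup_A |(μ*δ₁)(A) - μ(A)|`. -/
noncomputable def D1 (μ : Measure ℝ) : ℝ :=
  2 * ⨆ A : {A : Set ℝ // MeasurableSet A},
    |(μ.map (· + 1) A.1).toReal - (μ A.1).toReal|

/-- `D2 μ = ‖μ * (δ₁ - δ₀)^{*2}‖ = ‖μ*δ₂ - 2 μ*δ₁ + μ‖`. -/
noncomputable def D2 (μ : Measure ℝ) : ℝ :=
  2 * ⨆ A : {A : Set ℝ // MeasurableSet A},
    |(μ.map (· + 2) A.1).toReal - 2 * (μ.map (· + 1) A.1).toReal + (μ A.1).toReal|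

/-- The binomial distribution `Bi(n, p)` as a measure on `ℝ`. -/
noncomputable def binomMeasure (n : ℕ) (p : ℝ) : Measure ℝ :=
  Measure.sum (fun k : Fin (n + 1) =>
    (ENNReal.ofReal ((n.choose k) * p ^ (k : ℕ) * (1 - p) ^ (n - (k : ℕ)))) •
      Measure.dirac ((k : ℕ) : ℝ))

/-- The centered binomial distribution `B̂i(n, p)`, i.e. `Bi(n,p)` shifted by `-np`. -/
noncomputable def centeredBinom (n : ℕ) (p : ℝ) : Measure ℝ :=
  (binomMeasure n p).map (fun x => x - n * p)

/-! ### Binomial probabilities -/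

/-- The binomial probability `C(n,k) s^k (1-s)^(n-k)`, written exactly as the weights of
`binomMeasure`; it vanishes for `k > n`. -/
noncomputable def bpm (n k : ℕ) (s : ℝ) : ℝ := (n.choose k) * s ^ k * (1 - s) ^ (n - k)

lemma bpm_nonneg (n k : ℕ) {s : ℝ} (h0 : 0 < s) (h1 : s < 1) : 0 ≤ bpm n k s := by
  have : 0 < 1 - s := by linarith
  unfold bpm; positivity

lemma bpm_sum (n : ℕ) (s : ℝ) : ∑ k ∈ Finset.range (n + 1), bpm n k s = 1 := by
  have h := add_pow s (1 - s) n
  rw [show s + (1 - s) = 1 by ring, one_pow] at h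
  rw [h]
  exact Finset.sum_congr rfl fun k _ => by unfold bpm; ring

lemma bpm_sum_le (n : ℕ) {s : ℝ} (h0 : 0 < s) (h1 : s < 1) (S : Finset ℕ) :
    ∑ k ∈ S, bpm n k s ≤ 1 := by
  rw [← bpm_sum n s, ← Finset.sum_filter_add_sum_filter_not S (fun k => k < n + 1)]
  have h2 : ∑ k ∈ S with ¬ k < n + 1, bpm n k s = 0 := by
    apply Finset.sum_eq_zero
    intro k hk
    have : n < k := by have := (Finset.mem_filter.1 hk).2; omega
    simp [bpm, Nat.choose_eq_zero_of_lt this]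
  rw [h2, add_zero]
  apply Finset.sum_le_sum_of_subset_of_nonneg
  · intro k hk
    simpa using (Finset.mem_filter.1 hk).2
  · intro k _ _
    exact bpm_nonneg n k h0 h1

lemma bpm_le_one (n k : ℕ) {s : ℝ} (h0 : 0 < s) (h1 : s < 1) : bpm n k s ≤ 1 := by
  simpa using bpm_sum_le n h0 h1 {k}

lemma bpm_symm {n k : ℕ} (hk : k ≤ n) (s : ℝ) : bpm n (n - k) (1 - s) = bpm n k s := by
  unfold bpm
  rw [Nat.choose_symm hk, Nat.sub_sub_self hk, sub_sub_cancel]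
  ring

lemma bpm_succ {n k : ℕ} (hk : k ≤ n) (s : ℝ) :
    ((k : ℝ) + 1) * (1 - s) * bpm n (k + 1) s = ((n : ℝ) - k) * s * bpm n k s := by
  rcases hk.eq_or_lt with rfl | hlt
  · simp [bpm]
  · have h := Nat.choose_succ_right_eq n k
    have h' : (n.choose (k + 1) : ℝ) * (k + 1) = n.choose k * ((n : ℝ) - k) := by
      rw [← Nat.cast_sub hk]; exact_mod_cast h
    have e : n - k = (n - (k + 1)) + 1 := by omega
    unfold bpm
    rw [e, pow_succ (1 - s), pow_succ s]
    linear_combination (s ^ k * s * (1 - s) ^ (n - (k + 1)) * (1 - s)) * h'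

/-! ### Counting bounds -/

/-- Counting principle: if the `⌊x⌋ + 1` values starting at index `k` are all at least the value
at `k`, then their sum, which is at most `1`, is at least `x` times that value. -/
lemma bpm_count {n k : ℕ} {s x : ℝ} (h0 : 0 < s) (h1 : s < 1)
    (h : ∀ L : ℕ, (L : ℝ) ≤ x → bpm n k s ≤ bpm n (k + L) s) : bpm n k s * x ≤ 1 := by
  have hf := bpm_nonneg n k h0 h1
  rcases lt_or_ge x 0 with hx | hx
  · nlinarith
  have h2 : ∑ i ∈ Finset.range (⌊x⌋₊ + 1), bpm n k s
      ≤ ∑ i ∈ Finset.range (⌊x⌋₊ + 1), bpm n (k + i) s := by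
    apply Finset.sum_le_sum
    intro i hi
    apply h
    have : i ≤ ⌊x⌋₊ := by have := Finset.mem_range.1 hi; omega
    exact (Nat.le_floor_iff hx).1 this
  have h3 : ∑ i ∈ Finset.range (⌊x⌋₊ + 1), bpm n (k + i) s ≤ 1 := by
    have := bpm_sum_le n h0 h1 ((Finset.range (⌊x⌋₊ + 1)).map (addLeftEmbedding k))
    simpa using this
  rw [Finset.sum_const, Finset.card_range, nsmul_eq_mul] at h2
  push_cast at h2
  have := Nat.lt_floor_add_one x
  nlinarith

lemma bpm_mono {n k : ℕ} {s : ℝ} (h0 : 0 < s) (h1 : s < 1) (L : ℕ)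
    (h : (k : ℝ) + L ≤ (n + 1) * s) : bpm n k s ≤ bpm n (k + L) s := by
  induction L with
  | zero => simp
  | succ L ih =>
    push_cast at h
    refine (ih (by linarith)).trans ?_
    have hlt : k + L ≤ n := by
      have : (k : ℝ) + L + 1 ≤ n + 1 := by nlinarith
      exact_mod_cast (by linarith : (k : ℝ) + L ≤ n)
    have hs := bpm_succ hlt s
    have hf := bpm_nonneg n (k + L) h0 h1
    push_cast at hs
    have hc : 0 < ((k : ℝ) + L + 1) * (1 - s) := by
      have : 0 < 1 - s := by linarith
      positivity
    have hcc : ((k : ℝ) + L + 1) * (1 - s) ≤ ((n : ℝ) - (k + L)) * s := by nlinarith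
    have : ((k : ℝ) + L + 1) * (1 - s) * bpm n (k + L) s
        ≤ ((k : ℝ) + L + 1) * (1 - s) * bpm n (k + L + 1) s := by
      rw [hs]; exact mul_le_mul_of_nonneg_right hcc hf
    exact le_of_mul_le_mul_left this hc

lemma bpm_count_mono (n k : ℕ) {s : ℝ} (h0 : 0 < s) (h1 : s < 1) :
    bpm n k s * ((n + 1) * s - k) ≤ 1 :=
  bpm_count h0 h1 fun L hL => bpm_mono h0 h1 L (by linarith)

/-- For `s ≤ 1/2` the mass function is skewed to the right: going `L` steps up from `k` does not
lower the value as long as the midpoint of `k` and `k + L` lies at least `1/2` below `(n + 1) s`.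
The steps are paired from the outside inwards; each pair of successive ratios has product at
least `1`. -/
lemma bpm_skew {n : ℕ} {s : ℝ} (h0 : 0 < s) (h1 : s ≤ 1 / 2) (L : ℕ) : ∀ k : ℕ,
    2 * (k : ℝ) + L + 1 ≤ 2 * ((n + 1) * s) → bpm n k s ≤ bpm n (k + L) s := by
  have hs1 : s < 1 := by linarith
  induction L using Nat.strong_induction_on with
  | _ L ih =>
    intro k h
    rcases L with _ | _ | L
    · simp
    · push_cast at h
      exact bpm_mono h0 hs1 1 (by push_cast; linarith)
    · have hi := ih L (by omega) (k + 1) (by push_cast at h ⊢; linarith)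
      push_cast at h
      have hn : (k : ℝ) + L + 2 ≤ n := by
        have h3 : 2 * (k : ℝ) + L + 3 ≤ n + 1 := by nlinarith
        have : (0 : ℝ) ≤ k := by positivity
        linarith
      have hnn : k + L + 2 ≤ n := by exact_mod_cast hn
      have ea := bpm_succ (show k ≤ n by omega) s
      have eb := bpm_succ (show k + 1 + L ≤ n by omega) s
      rw [show k + (L + 1 + 1) = k + 1 + L + 1 by ring]
      push_cast at eb
      set A : ℝ := (k : ℝ) + 1 with hA
      set B : ℝ := (k : ℝ) + 1 + L + 1 with hB
      have hA0 : 0 < A := by positivity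
      have hB0 : 0 < B := by positivity
      have hq : 0 < 1 - s := by linarith
      -- The product of the two ratios `(N - A) s / (A (1 - s))` and `(N - B) s / (B (1 - s))`
      -- is at least `1`, with equality for `A = B = N s`.
      have key : A * (1 - s) * (B * (1 - s)) ≤
          ((n : ℝ) - k) * s * (((n : ℝ) - (k + 1 + L)) * s) := by
        have e1 : (n : ℝ) - k = (n + 1) - A := by rw [hA]; ring
        have e2 : (n : ℝ) - (k + 1 + L) = (n + 1) - B := by rw [hB]; ring
        rw [e1, e2]
        set N : ℝ := (n : ℝ) + 1 with hN
        have hN0 : 0 < N := by positivity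
        have hS : A + B ≤ 2 * (N * s) := by rw [hA, hB]; linarith
        have hAB : 4 * (A * B) ≤ (A + B) ^ 2 := by nlinarith [sq_nonneg (A - B)]
        have hsq : (A + B) ^ 2 ≤ (2 * (N * s)) ^ 2 := by gcongr
        have h12 : 0 ≤ 1 - 2 * s := by linarith
        have h5 := mul_le_mul_of_nonneg_left (hAB.trans hsq) h12
        have h6 := mul_le_mul_of_nonneg_left hS (show 0 ≤ s ^ 2 * N by positivity)
        nlinarith
      have hX := bpm_nonneg n (k + 1) h0 hs1
      have hY := bpm_nonneg n (k + 1 + L) h0 hs1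
      have hK := bpm_nonneg n k h0 hs1
      have hc1 : 0 < ((n : ℝ) - k) * s := by
        apply mul_pos _ h0
        have : (0 : ℝ) ≤ L := by positivity
        linarith
      have hc2 : 0 < B * (1 - s) := by positivity
      have hb2 : 0 < A * (1 - s) := by positivity
      have hd : 0 < ((n : ℝ) - (k + 1 + L)) * s := mul_pos (by linarith) h0
      have : (((n : ℝ) - k) * s) * (B * (1 - s)) * bpm n k s
          ≤ (((n : ℝ) - k) * s) * (B * (1 - s)) * bpm n (k + 1 + L + 1) s := by
        calc (((n : ℝ) - k) * s) * (B * (1 - s)) * bpm n k s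
            = (B * (1 - s)) * (((n : ℝ) - k) * s * bpm n k s) := by ring
          _ = (A * (1 - s) * (B * (1 - s))) * bpm n (k + 1) s := by rw [← ea]; ring
          _ ≤ (((n : ℝ) - k) * s * (((n : ℝ) - (k + 1 + L)) * s)) * bpm n (k + 1 + L) s :=
              mul_le_mul key hi hX (by positivity)
          _ = (((n : ℝ) - k) * s) * (((n : ℝ) - (k + 1 + L)) * s * bpm n (k + 1 + L) s) := by
              ring
          _ = _ := by rw [← eb]; ring
      exact le_of_mul_le_mul_left this (by positivity)

lemma bpm_count_skew (n k : ℕ) {s : ℝ} (h0 : 0 < s) (h1 : s ≤ 1 / 2) :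
    bpm n k s * (2 * ((n + 1) * s) - 2 * k - 1) ≤ 1 :=
  bpm_count h0 (by linarith) fun L hL => bpm_skew h0 h1 L k (by linarith)

/-- For `0 < k < n` the neighbours satisfy `4 * f (k-1) * f (k+1) ≥ (f k)^2`, so by the inequality
of means their sum is at least `f k`. -/
lemma bpm_le_half {n k : ℕ} {s : ℝ} (h0 : 0 < s) (h1 : s < 1) (hk : k + 1 < n) :
    bpm n (k + 1) s ≤ 1 / 2 := by
  have e1 := bpm_succ (show k ≤ n by omega) s
  have e2 := bpm_succ (show k + 1 ≤ n by omega) s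
  push_cast at e2
  have ha := bpm_nonneg n k h0 h1
  have hb := bpm_nonneg n (k + 1) h0 h1
  have hc := bpm_nonneg n (k + 2) h0 h1
  have hsum := bpm_sum_le n h0 h1 {k, k + 1, k + 2}
  rw [Finset.sum_insert (by simp), Finset.sum_insert (by simp), Finset.sum_singleton] at hsum
  rw [show k + 1 + 1 = k + 2 by ring] at e2
  set a := bpm n k s
  set b := bpm n (k + 1) s
  set c := bpm n (k + 2) s
  have hn : (k : ℝ) + 2 ≤ n := by exact_mod_cast hk
  have hk0 : (0 : ℝ) ≤ k := by positivity
  have hq : 0 < 1 - s := by linarith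
  have hm : ((k : ℝ) + 1) * ((n : ℝ) - (k + 1)) * b * b
      = ((k : ℝ) + 2) * ((n : ℝ) - k) * (a * c) := by
    have hne : s * (1 - s) ≠ 0 := by positivity
    apply mul_left_cancel₀ hne
    linear_combination ((n : ℝ) - (k + 1)) * s * b * e1 - ((n : ℝ) - k) * s * a * e2
  have h4 : ((k : ℝ) + 2) * ((n : ℝ) - k) ≤ 4 * (((k : ℝ) + 1) * ((n : ℝ) - (k + 1))) := by
    nlinarith
  have hpos : 0 < ((k : ℝ) + 1) * ((n : ℝ) - (k + 1)) := mul_pos (by linarith) (by linarith)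
  have hbb : b * b ≤ 4 * (a * c) := by
    have h5 := mul_le_mul_of_nonneg_right h4 (mul_nonneg ha hc)
    have : (((k : ℝ) + 1) * ((n : ℝ) - (k + 1))) * (b * b)
      ≤ (((k : ℝ) + 1) * ((n : ℝ) - (k + 1))) * (4 * (a * c)) := by nlinarith
    exact le_of_mul_le_mul_left this hpos
  have : b ≤ a + c := by
    apply abs_le_of_sq_le_sq' _ (by positivity) |>.2
    nlinarith [sq_nonneg (a - c)]
  linarith

/-! ### Mean value theorem for `u * bpm n k u` -/

lemma hasDerivAt_mul_bpm {n k : ℕ} (hk : k ≤ n) {s : ℝ} (h1 : s < 1) :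
    HasDerivAt (fun u => u * bpm n k u) (bpm n k s * (k + 1 - (n + 1) * s) / (1 - s)) s := by
  obtain ⟨m, rfl⟩ := Nat.exists_eq_add_of_le hk
  have hq : (1 - s) ≠ 0 := by linarith
  have hd : HasDerivAt (fun u : ℝ => u * (((k + m).choose k : ℝ) * u ^ k * (1 - u) ^ m)) _ s :=
    (hasDerivAt_id s).mul ((((hasDerivAt_pow k s).const_mul ((k + m).choose k : ℝ))).mul
      (((hasDerivAt_id s).const_sub 1).pow m))
  unfold bpm
  simp only [Nat.add_sub_cancel_left]
  convert hd using 1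
  have hs : (k : ℝ) * s ^ k = k * s ^ (k - 1) * s := by
    rcases k with _ | k
    · simp
    · simp [pow_succ]; ring
  have hm : (m : ℝ) * (1 - s) ^ m = m * (1 - s) ^ (m - 1) * (1 - s) := by
    rcases m with _ | m
    · simp
    · simp [pow_succ]; ring
  rw [div_eq_iff hq]
  simp only [id]
  push_cast
  linear_combination ((k + m).choose k : ℝ) * (1 - s) ^ m * (1 - s) * hs
    - ((k + m).choose k : ℝ) * s ^ k * s * hm

/-- Mean value theorem for `u ↦ u * bpm n k u` on `[r, p]`. -/
lemma exists_mvt {n k : ℕ} (hk : k ≤ n) {r p : ℝ} (hrp : r < p) (hp : p < 1) :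
    ∃ x, r < x ∧ x < p ∧ p * bpm n k p - r * bpm n k r
      = (p - r) * (bpm n k x * (k + 1 - (n + 1) * x) / (1 - x)) := by
  obtain ⟨x, hx, he⟩ := exists_hasDerivAt_eq_slope (fun u => u * bpm n k u)
    (fun s => bpm n k s * (k + 1 - (n + 1) * s) / (1 - s)) hrp
    (fun s hs => (hasDerivAt_mul_bpm hk (hs.2.trans_lt hp)).continuousAt.continuousWithinAt)
    (fun s hs => hasDerivAt_mul_bpm hk (hs.2.trans hp))
  refine ⟨x, hx.1, hx.2, ?_⟩
  rw [he]
  have : p - r ≠ 0 := by linarith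
  field_simp

/-! ### Pointwise comparison of two success probabilities -/

lemma bpm_sub_le_up {n k : ℕ} (hk : k ≤ n) {r p : ℝ} (hr : 0 < r) (hrp : r < p) (hp : p < 1) :
    p * (1 - p) * (bpm n k p - bpm n k r) ≤ p - r := by
  obtain ⟨x, h1, h2, he⟩ := exists_mvt hk hrp hp
  have hx0 : 0 < x := by linarith
  have hx1 : x < 1 := by linarith
  have hc := bpm_count_mono n (n - k) (s := 1 - x) (by linarith) (by linarith)
  rw [bpm_symm hk, Nat.cast_sub hk] at hc
  have hc' : bpm n k x * (k + 1 - (n + 1) * x) ≤ 1 := by linarith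
  have hq : 0 < 1 - p := by linarith
  have hf := bpm_nonneg n k hr (hrp.trans hp)
  have h3 : bpm n k x * (k + 1 - (n + 1) * x) / (1 - x) ≤ 1 / (1 - p) := by
    apply div_le_div₀ <;> linarith
  have ht : 0 < p - r := by linarith
  have h4 : p * (bpm n k p - bpm n k r) ≤ (p - r) * (1 / (1 - p)) := by
    have := mul_le_mul_of_nonneg_left h3 ht.le
    nlinarith
  have h5 := mul_le_mul_of_nonneg_left h4 hq.le
  have h6 : (1 - p) * ((p - r) * (1 / (1 - p))) = p - r := by field_simp
  linarith

/-- A count `c` bounding `f k x * ((n + 1) x - (k + 1))` and a bound `1/2` for `f k r` control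
the downward difference. -/
lemma bpm_sub_le_down_aux {n k : ℕ} (hk : k ≤ n) {r p c : ℝ} (hrp : r < p)
    (hp : p < 1) (hc0 : 0 ≤ c) (hhalf : bpm n k r ≤ 1 / 2)
    (hc : ∀ x, r < x → x < p → bpm n k x * ((n + 1) * x - (k + 1)) ≤ c) :
    p * (1 - p) * (bpm n k r - bpm n k p) ≤ (p - r) * ((1 - p) / 2 + c) := by
  obtain ⟨x, h1, h2, he⟩ := exists_mvt hk hrp hp
  have hq : 0 < 1 - p := by linarith
  have h3 : bpm n k x * ((n + 1) * x - (k + 1)) / (1 - x) ≤ c / (1 - p) := by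
    apply div_le_div₀ hc0 (hc x h1 h2) hq (by linarith)
  have ht : 0 < p - r := by linarith
  have h7 : bpm n k x * (k + 1 - (n + 1) * x) / (1 - x)
      = - (bpm n k x * ((n + 1) * x - (k + 1)) / (1 - x)) := by ring
  rw [h7] at he
  have h4 : p * (bpm n k r - bpm n k p) ≤ (p - r) * (1 / 2 + c / (1 - p)) := by
    have := mul_le_mul_of_nonneg_left h3 ht.le
    nlinarith
  have h5 := mul_le_mul_of_nonneg_left h4 hq.le
  have h6 : (1 - p) * ((p - r) * (1 / 2 + c / (1 - p))) = (p - r) * ((1 - p) / 2 + c) := by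
    field_simp
  linarith

lemma bpm_zero_sub_le {n : ℕ} {r p : ℝ} (hr : 0 < r) (hrp : r < p) (hp : p < 1) :
    p * (1 - p) * (bpm n 0 r - bpm n 0 p) ≤ p - r := by
  have hp0 : 0 < p := by linarith
  have hconv := (convexOn_pow (𝕜 := ℝ) n).2 (show (1 : ℝ) ∈ Set.Ici 0 by simp)
    (show 1 - p ∈ Set.Ici 0 by simp only [Set.mem_Ici]; linarith)
    (show 0 ≤ (p - r) / p from div_nonneg (by linarith) hp0.le) (show 0 ≤ r / p by positivity)
    (by field_simp; ring)
  have e : (p - r) / p * 1 + r / p * (1 - p) = 1 - r := by field_simp; ring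
  simp only [smul_eq_mul, one_pow] at hconv
  rw [e] at hconv
  simp only [bpm, Nat.choose_zero_right, pow_zero, Nat.sub_zero, Nat.cast_one, one_mul]
  have hq : 0 ≤ (1 - p) ^ n := pow_nonneg (by linarith) n
  have h2 : p * (1 - r) ^ n ≤ (p - r) + r * (1 - p) ^ n := by
    have := mul_le_mul_of_nonneg_left hconv hp0.le
    have e2 : p * ((p - r) / p * 1 + r / p * (1 - p) ^ n) = (p - r) + r * (1 - p) ^ n := by
      field_simp
    linarith
  have h3 : p * ((1 - r) ^ n - (1 - p) ^ n) ≤ p - r := by nlinarith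
  nlinarith

lemma bpm_sub_le_down {n k : ℕ} (hk : k ≤ n) {r p : ℝ} (hr : 0 < r) (hrp : r < p)
    (hp : p < 1) :
    p * (1 - p) * (bpm n k r - bpm n k p) ≤ (p - r) * (1 + min r (1 - r)) := by
  have hp0 : 0 < p := by linarith
  have hr1 : r < 1 := by linarith
  have ht : 0 < p - r := by linarith
  have hmin : 0 ≤ min r (1 - r) := le_min (by linarith) (by linarith)
  have hpq : 0 < p * (1 - p) := mul_pos hp0 (by linarith)
  have hweak : p * (1 - p) * (bpm n k r - bpm n k p) ≤ p - r →
      p * (1 - p) * (bpm n k r - bpm n k p) ≤ (p - r) * (1 + min r (1 - r)) := by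
    intro h; nlinarith
  rcases k with _ | k
  · exact hweak (bpm_zero_sub_le hr hrp hp)
  rcases hk.eq_or_lt with rfl | hlt
  · apply hweak
    have : bpm (k + 1) (k + 1) r ≤ bpm (k + 1) (k + 1) p := by
      simp only [bpm, Nat.choose_self, Nat.sub_self, pow_zero, Nat.cast_one, one_mul, mul_one]
      gcongr
    nlinarith
  have hhalf := bpm_le_half hr hr1 hlt
  rcases le_or_gt p (1 / 2) with h2 | h2
  · apply hweak
    have := bpm_sub_le_down_aux hk hrp hp (c := 1 / 2) (by norm_num) hhalf (by
      intro x hx1 hx2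
      have h5 := bpm_count_skew n (k + 1) (s := x) (by linarith) (by linarith)
      have h6 := bpm_nonneg n (k + 1) (s := x) (by linarith) (by linarith)
      nlinarith)
    nlinarith
  · rcases lt_or_ge r ((1 - p) / 2) with h3 | h3
    -- In this range `p - r ≥ p (1 - p)`, so the trivial bound `1` for the difference suffices.
    · apply hweak
      have h4 := bpm_le_one n (k + 1) hr hr1
      have h5 := bpm_nonneg n (k + 1) hp0 hp
      have h6 : p * (1 - p) ≤ p - r := by nlinarith
      nlinarith
    · have := bpm_sub_le_down_aux hk hrp hp (c := 1) (by norm_num) hhalf (by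
        intro x hx1 hx2
        have h5 := bpm_count_mono n (k + 1) (s := x) (by linarith) (by linarith)
        have h6 := bpm_nonneg n (k + 1) (s := x) (by linarith) (by linarith)
        push_cast at h5 ⊢
        nlinarith)
      refine this.trans (mul_le_mul_of_nonneg_left ?_ ht.le)
      have : (1 - p) / 2 ≤ min r (1 - r) := le_min h3 (by linarith)
      linarith

lemma abs_bpm_sub_le_of_lt {n k : ℕ} (hk : k ≤ n) {r p : ℝ} (hr : 0 < r) (hrp : r < p)
    (hp : p < 1) :
    p * (1 - p) * |bpm n k r - bpm n k p| ≤ (p - r) * (1 + min r (1 - r)) := by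
  have h1 := bpm_sub_le_up hk hr hrp hp
  have h2 := bpm_sub_le_down hk hr hrp hp
  have hmin : 0 ≤ min r (1 - r) := le_min (by linarith) (by linarith)
  rcases abs_cases (bpm n k r - bpm n k p) with ⟨h, _⟩ | ⟨h, _⟩
  · rw [h]; exact h2
  · rw [h]; nlinarith

lemma abs_bpm_sub_le {n k : ℕ} (hk : k ≤ n) {r p : ℝ} (hr : 0 < r) (hr1 : r < 1) (hp : 0 < p)
    (hp1 : p < 1) : p * (1 - p) * |bpm n k r - bpm n k p| ≤ |p - r| * (1 + r) := by
  rcases lt_trichotomy r p with h | h | h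
  · rw [abs_of_pos (sub_pos.2 h)]
    exact (abs_bpm_sub_le_of_lt hk hr h hp1).trans
      (mul_le_mul_of_nonneg_left (by linarith [min_le_left r (1 - r)]) (by linarith))
  · subst h; simp
  · have := abs_bpm_sub_le_of_lt (Nat.sub_le n k) (r := 1 - r) (p := 1 - p) (by linarith)
      (by linarith) (by linarith)
    rw [bpm_symm hk, bpm_symm hk] at this
    rw [abs_of_neg (sub_neg.2 h)]
    have h2 : (1 - p - (1 - r)) * (1 + min (1 - r) (1 - (1 - r))) ≤ -(p - r) * (1 + r) := by
      rw [show 1 - p - (1 - r) = -(p - r) by ring]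
      exact mul_le_mul_of_nonneg_left (by linarith [min_le_right (1 - r) (1 - (1 - r))])
        (by linarith)
    nlinarith

/-! ### Passage to measures -/

lemma binomMeasure_toReal (n : ℕ) {s : ℝ} (h0 : 0 < s) (h1 : s < 1) {A : Set ℝ}
    (hA : MeasurableSet A) :
    (binomMeasure n s A).toReal
      = ∑ k : Fin (n + 1), bpm n k s * A.indicator 1 (((k : ℕ) : ℝ)) := by
  unfold binomMeasure
  rw [Measure.sum_apply _ hA, tsum_fintype, ENNReal.toReal_sum]
  · refine Finset.sum_congr rfl fun k _ => ?_
    rw [Measure.smul_apply, Measure.dirac_apply' _ hA, smul_eq_mul, ENNReal.toReal_mul]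
    change (ENNReal.ofReal (bpm n k s)).toReal * _ = _
    rw [ENNReal.toReal_ofReal (bpm_nonneg n k h0 h1)]
    congr 1
    by_cases hk : ((k : ℕ) : ℝ) ∈ A <;> simp [hk]
  · intro k _
    rw [Measure.smul_apply, Measure.dirac_apply' _ hA, smul_eq_mul]
    apply ENNReal.mul_ne_top ENNReal.ofReal_ne_top
    by_cases hk : ((k : ℕ) : ℝ) ∈ A <;> simp [hk]

/-- Lemma 5.2 (local limit part): comparison of two binomial distributions
with different success probabilities. -/
theorem stmt15 (n : ℕ) (p t : ℝ) (hp : 0 < p) (hp1 : p < 1)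
    (ht1 : -(1 - p) < t) (ht2 : t < p) :
    dloc (binomMeasure n (p - t)) (binomMeasure n p) ≤
      |t| * ((1 + p - t) / (p * (1 - p))
        + Real.sqrt ((p - t) * ((1 - p) + t)) / (p * (1 - p) * Real.sqrt n)) := by
  have hr : 0 < p - t := by linarith
  have hr1 : p - t < 1 := by linarith
  have hpq : 0 < p * (1 - p) := mul_pos hp (by linarith)
  have hB : ∀ k ≤ n, |bpm n k (p - t) - bpm n k p| ≤
      |t| * ((1 + p - t) / (p * (1 - p))
        + Real.sqrt ((p - t) * ((1 - p) + t)) / (p * (1 - p) * Real.sqrt n)) := by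
    intro k hk
    have h := abs_bpm_sub_le hk hr hr1 hp hp1
    rw [sub_sub_cancel] at h
    have h2 : |bpm n k (p - t) - bpm n k p| ≤ |t| * ((1 + p - t) / (p * (1 - p))) := by
      rw [← mul_div_assoc, le_div_iff₀ hpq]
      linarith
    refine h2.trans (mul_le_mul_of_nonneg_left ?_ (abs_nonneg t))
    have : 0 ≤ Real.sqrt ((p - t) * ((1 - p) + t)) / (p * (1 - p) * Real.sqrt n) := by positivity
    linarith
  apply ciSup_le
  intro x
  rw [binomMeasure_toReal n hr hr1 measurableSet_Ico, binomMeasure_toReal n hp hp1 measurableSet_Ico,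
    ← Finset.sum_sub_distrib]
  by_cases hx : ∃ k : Fin (n + 1), ((k : ℕ) : ℝ) ∈ Set.Ico x (x + 1)
  · obtain ⟨k, hk⟩ := hx
    rw [Finset.sum_eq_single k]
    · simpa [Set.indicator_of_mem hk] using hB k (by omega)
    · intro j _ hj
      have hj' : ((j : ℕ) : ℝ) ∉ Set.Ico x (x + 1) := by
        intro hm
        apply hj
        have h1 : ((j : ℕ) : ℝ) < (k : ℕ) + 1 := by linarith [hm.2, hk.1]
        have h2 : ((k : ℕ) : ℝ) < (j : ℕ) + 1 := by linarith [hk.2, hm.1]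
        have h1' : (j : ℕ) < k + 1 := by exact_mod_cast h1
        have h2' : (k : ℕ) < j + 1 := by exact_mod_cast h2
        exact Fin.ext (by omega)
      simp [Set.indicator_of_notMem hj']
    · simp
  · push Not at hx
    rw [Finset.sum_eq_zero]
    · rw [abs_zero]
      exact (abs_nonneg _).trans (hB 0 (Nat.zero_le n))
    · intro j _
      simp [Set.indicator_of_notMem (hx j)]
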